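/- Let α ∈ ℝ, v > 0, and μ_{G1}, μ_{G2}, μ_{P1}, μ_{P2} ∈ ℝ. Define ρ₁ = α·N(·; μ_{G1}, v) + (1−α)·N(·; μ_{P1}, v), ρ₂ = α·N(·; μ_{G1}, v) + (1−α)·N(·; μ_{P2}, v), ρ₃ = α·N(·; μ_{G2}, v) + (1−α)·N(·; μ_{P1}, v), and ρ₄ = α·N(·; μ_{G2}, v) + (1−α)·N(·; μ_{P2}, v). Then ∫ (ρ₁ − ρ₄)² = ∫ (ρ₁ − ρ₂)² + ∫ (ρ₁ − ρ₃)² + 2α(1−α)·(N(μ_{G1}; μ_{P1}, 2v) − N(μ_{G1}; μ_{P2}, 2v) + N(μ_{G2}; μ_{P2}, 2v) − N(μ_{G2}; μ_{P1}, 2v)). -/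

import Mathlib

open MeasureTheory Real

/-- The Gaussian probability density on `ℝ` with mean `μ` and variance `v`:
`N(x; μ, v) = (2πv)^{-1/2} exp(-(x-μ)²/(2v))`. -/
noncomputable def gaussPdf (μ v x : ℝ) : ℝ :=
    (Real.sqrt (2 * Real.pi * v))⁻¹ * Real.exp (-(x - μ) ^ 2 / (2 * v))

theorem gaussPdf_mul (a b v x : ℝ) (hv : 0 < v) :
    gaussPdf a v x * gaussPdf b v x =
      gaussPdf b (2 * v) a * gaussPdf ((a + b) / 2) (v / 2) x := by
  unfold gaussPdf
  rw [mul_mul_mul_comm, mul_mul_mul_comm (Real.sqrt (2 * π * (2 * v)))⁻¹, ← Real.exp_add,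
    ← Real.exp_add, ← mul_inv, ← mul_inv, ← Real.sqrt_mul (by positivity),
    ← Real.sqrt_mul (by positivity)]
  have e1 : 2 * π * v * (2 * π * v) = 2 * π * (2 * v) * (2 * π * (v / 2)) := by ring
  have e2 : -(x - a) ^ 2 / (2 * v) + -(x - b) ^ 2 / (2 * v) =
      -(a - b) ^ 2 / (2 * (2 * v)) + -(x - (a + b) / 2) ^ 2 / (2 * (v / 2)) := by
    field_simp
    ring
  rw [e1, e2]

theorem gaussPdf_integrable (m v : ℝ) (hv : 0 < v) :
    Integrable (gaussPdf m v) ∧ ∫ x, gaussPdf m v x = 1 := by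
  have e : gaussPdf m v = ProbabilityTheory.gaussianPDFReal m ⟨v, hv.le⟩ := by
    ext x
    rfl
  have hne : (⟨v, hv.le⟩ : NNReal) ≠ 0 := by
    intro h
    exact hv.ne' (congrArg NNReal.toReal h)
  rw [e]
  exact ⟨ProbabilityTheory.integrable_gaussianPDFReal _ _,
    ProbabilityTheory.integral_gaussianPDFReal_eq_one _ hne⟩

theorem gaussPdf_mul_integrable (a b v : ℝ) (hv : 0 < v) :
    Integrable (fun x => gaussPdf a v x * gaussPdf b v x) := by
  simp_rw [gaussPdf_mul a b v _ hv]
  exact (gaussPdf_integrable _ _ (by positivity)).1.const_mul _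

theorem gaussPdf_mul_integral (a b v : ℝ) (hv : 0 < v) :
    ∫ x, gaussPdf a v x * gaussPdf b v x = gaussPdf b (2 * v) a := by
  simp_rw [gaussPdf_mul a b v _ hv]
  rw [integral_const_mul, (gaussPdf_integrable _ _ (by positivity)).2, mul_one]

theorem gaussPdf_diff_integrable (a b c d v : ℝ) (hv : 0 < v) :
    Integrable (fun x => (gaussPdf a v x - gaussPdf b v x) * (gaussPdf c v x - gaussPdf d v x)) := by
  have := (((gaussPdf_mul_integrable a c v hv).sub (gaussPdf_mul_integrable a d v hv)).add
    (gaussPdf_mul_integrable b d v hv)).sub (gaussPdf_mul_integrable b c v hv)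
  refine this.congr (ae_of_all _ fun x => ?_)
  simp only [Pi.sub_apply, Pi.add_apply]
  ring

theorem gaussPdf_diff_integral (a b c d v : ℝ) (hv : 0 < v) :
    ∫ x, (gaussPdf a v x - gaussPdf b v x) * (gaussPdf c v x - gaussPdf d v x) =
      gaussPdf c (2 * v) a - gaussPdf d (2 * v) a + gaussPdf d (2 * v) b
        - gaussPdf c (2 * v) b := by
  have h1 := gaussPdf_mul_integrable a c v hv
  have h2 := gaussPdf_mul_integrable a d v hv
  have h3 := gaussPdf_mul_integrable b d v hv
  have h4 := gaussPdf_mul_integrable b c v hv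
  rw [← gaussPdf_mul_integral a c v hv, ← gaussPdf_mul_integral a d v hv,
    ← gaussPdf_mul_integral b d v hv, ← gaussPdf_mul_integral b c v hv,
    ← integral_sub' h1 h2, ← integral_add' (h1.sub h2) h3, ← integral_sub' ((h1.sub h2).add h3) h4]
  congr 1
  ext x
  simp only [Pi.sub_apply, Pi.add_apply]
  ring

/-- Equation 11 of the paper: with the four mixtures
`ρ₁ = α·N(·; μG1, v) + (1-α)·N(·; μP1, v)`, `ρ₂ = α·N(·; μG1, v) + (1-α)·N(·; μP2, v)`,
`ρ₃ = α·N(·; μG2, v) + (1-α)·N(·; μP1, v)`, `ρ₄ = α·N(·; μG2, v) + (1-α)·N(·; μP2, v)`,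
the squared distance to the invalid-depth ray decomposes as
`∫(ρ₁-ρ₄)² = ∫(ρ₁-ρ₂)² + ∫(ρ₁-ρ₃)²
  + 2α(1-α)(N(μG1;μP1,2v) - N(μG1;μP2,2v) + N(μG2;μP2,2v) - N(μG2;μP1,2v))`. -/
theorem mixture_L2_dist_rho1_rho4 (α v μG1 μG2 μP1 μP2 : ℝ) (hv : 0 < v) :
    ∫ lam : ℝ,
        ((α * gaussPdf μG1 v lam + (1 - α) * gaussPdf μP1 v lam) -
          (α * gaussPdf μG2 v lam + (1 - α) * gaussPdf μP2 v lam)) ^ 2 =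
      (∫ lam : ℝ,
        ((α * gaussPdf μG1 v lam + (1 - α) * gaussPdf μP1 v lam) -
          (α * gaussPdf μG1 v lam + (1 - α) * gaussPdf μP2 v lam)) ^ 2) +
      (∫ lam : ℝ,
        ((α * gaussPdf μG1 v lam + (1 - α) * gaussPdf μP1 v lam) -
          (α * gaussPdf μG2 v lam + (1 - α) * gaussPdf μP1 v lam)) ^ 2) +
      2 * α * (1 - α) *
        (gaussPdf μP1 (2 * v) μG1 - gaussPdf μP2 (2 * v) μG1 +
          gaussPdf μP2 (2 * v) μG2 - gaussPdf μP1 (2 * v) μG2) := by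
  rw [← gaussPdf_diff_integral μG1 μG2 μP1 μP2 v hv, ← integral_const_mul]
  have i1 := (gaussPdf_diff_integrable μP1 μP2 μP1 μP2 v hv).const_mul ((1 - α) ^ 2)
  have i2 := (gaussPdf_diff_integrable μG1 μG2 μG1 μG2 v hv).const_mul (α ^ 2)
  have i3 := (gaussPdf_diff_integrable μG1 μG2 μP1 μP2 v hv).const_mul (2 * α * (1 - α))
  have j1 : Integrable (fun lam : ℝ =>
        ((α * gaussPdf μG1 v lam + (1 - α) * gaussPdf μP1 v lam) -
          (α * gaussPdf μG1 v lam + (1 - α) * gaussPdf μP2 v lam)) ^ 2) :=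
    i1.congr (ae_of_all _ fun x => by ring)
  have j2 : Integrable (fun lam : ℝ =>
        ((α * gaussPdf μG1 v lam + (1 - α) * gaussPdf μP1 v lam) -
          (α * gaussPdf μG2 v lam + (1 - α) * gaussPdf μP1 v lam)) ^ 2) :=
    i2.congr (ae_of_all _ fun x => by ring)
  rw [← integral_add' j1 j2, ← integral_add' (j1.add j2) i3]
  congr 1
  ext x
  simp only [Pi.add_apply]
  ring
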